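/- For 1 ≤ l ≤ n let f_l(x) = x_{l−1} / √(s_{l−1}(x) s_l(x)) on U. Then for all 1 ≤ k, l ≤ n and every x ∈ U ∩ S^n, the directional derivative D_{e_k(x)} f_l(x) equals 0 if k > l, equals −1/s_k(x) if k = l, and equals −x_{k−1} x_{l−1} / √(s_{k−1}(x) s_k(x) s_{l−1}(x) s_l(x)) if k < l. -/

import Mathlib

open scoped InnerProductSpace BigOperators

noncomputable section

/-- `s_j(x) = ∑_{r=j}^n x_r²`. -/
def sfun (n j : ℕ) (x : EuclideanSpace ℝ (Fin (n + 1))) : ℝ :=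
  ∑ r : Fin (n + 1), if j ≤ (r : ℕ) then x r ^ 2 else 0

/-- The `j`-th coordinate of `x` (read as a natural-number index, `0` out of range). -/
def coordfun (n : ℕ) (x : EuclideanSpace ℝ (Fin (n + 1))) (j : ℕ) : ℝ :=
  if h : j < n + 1 then x ⟨j, h⟩ else 0

/-- The vector field `e_j(x) = √(s_j/s_{j-1}) ( −∂_{j−1} + (x_{j−1}/s_j) Σ_{r=j}^n x_r ∂_r )`. -/
def efun (n j : ℕ) (x : EuclideanSpace ℝ (Fin (n + 1))) : EuclideanSpace ℝ (Fin (n + 1)) :=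
  WithLp.toLp 2 fun r => Real.sqrt (sfun n j x / sfun n (j - 1) x) *
    (-(if (r : ℕ) = j - 1 then 1 else 0)
      + coordfun n x (j - 1) / sfun n j x * (if j ≤ (r : ℕ) then x r else 0))

/-- `U = {x ∈ ℝ^{n+1} : x_n > 0}`. -/
def Usph (n : ℕ) : Set (EuclideanSpace ℝ (Fin (n + 1))) := {x | 0 < coordfun n x n}

/-- The unit sphere `S^n ⊂ ℝ^{n+1}`. -/
def sph (n : ℕ) : Set (EuclideanSpace ℝ (Fin (n + 1))) :=
  {x | ∑ r : Fin (n + 1), x r ^ 2 = 1}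

/-- `f_l(x) = x_{l−1} / √(s_{l−1}(x) s_l(x))`. -/
def ffun (n l : ℕ) (x : EuclideanSpace ℝ (Fin (n + 1))) : ℝ :=
  coordfun n x (l - 1) / Real.sqrt (sfun n (l - 1) x * sfun n l x)

lemma hasFDerivAt_sfun (n j : ℕ) (x : EuclideanSpace ℝ (Fin (n + 1))) :
    HasFDerivAt (sfun n j)
      (∑ r : Fin (n + 1), if j ≤ (r : ℕ) then
        (2 * x r) • (EuclideanSpace.proj r : EuclideanSpace ℝ (Fin (n + 1)) →L[ℝ] ℝ) else 0) x := by
  unfold sfun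
  refine HasFDerivAt.fun_sum fun r _ => ?_
  split_ifs
  · simpa using
      (EuclideanSpace.proj r : EuclideanSpace ℝ (Fin (n + 1)) →L[ℝ] ℝ).hasFDerivAt.pow 2
  · exact hasFDerivAt_const _ _

lemma hasFDerivAt_coordfun {n j : ℕ} (hj : j < n + 1) (x : EuclideanSpace ℝ (Fin (n + 1))) :
    HasFDerivAt (fun y => coordfun n y j)
      (EuclideanSpace.proj ⟨j, hj⟩ : EuclideanSpace ℝ (Fin (n + 1)) →L[ℝ] ℝ) x := by
  simpa [coordfun, hj] using
    (EuclideanSpace.proj ⟨j, hj⟩ : EuclideanSpace ℝ (Fin (n + 1)) →L[ℝ] ℝ).hasFDerivAt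

lemma sfun_pos {n j : ℕ} (hj : j ≤ n) {x : EuclideanSpace ℝ (Fin (n + 1))} (hx : x ∈ Usph n) :
    0 < sfun n j x := by
  have hn : 0 < x (Fin.last n) := by simpa [Usph, coordfun, Fin.last] using hx
  refine Finset.sum_pos' (fun r _ => by split_ifs <;> positivity)
    ⟨Fin.last n, Finset.mem_univ _, ?_⟩
  simp only [Fin.val_last, hj, if_true]
  positivity

lemma sfun_sub_one {n j : ℕ} (hj : 1 ≤ j) (hjn : j ≤ n) (x : EuclideanSpace ℝ (Fin (n + 1))) :
    sfun n (j - 1) x = coordfun n x (j - 1) ^ 2 + sfun n j x := by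
  have hlt : j - 1 < n + 1 := by omega
  have hsingle : coordfun n x (j - 1) ^ 2
      = ∑ r : Fin (n + 1), if r = ⟨j - 1, hlt⟩ then x r ^ 2 else 0 := by
    simp [coordfun, hlt]
  rw [hsingle, sfun, sfun, ← Finset.sum_add_distrib]
  refine Finset.sum_congr rfl fun r _ => ?_
  simp only [Fin.ext_iff]
  split_ifs <;> first | omega | simp

/-- For `j < k` the field `e_k` is tangent to the level
sets of `s_j`. -/
lemma fderiv_sfun_efun_of_lt {n j k : ℕ} (hjk : j < k) (hkn : k ≤ n)
    {x : EuclideanSpace ℝ (Fin (n + 1))} (hx : x ∈ Usph n) :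
    fderiv ℝ (sfun n j) x (efun n k x) = 0 := by
  have hlt : k - 1 < n + 1 := by omega
  have hs := (sfun_pos hkn hx).ne'
  rw [(hasFDerivAt_sfun n j x).fderiv, sum_apply]
  have hterm : ∀ r : Fin (n + 1),
      (if j ≤ (r : ℕ) then
        (2 * x r) • (EuclideanSpace.proj r : EuclideanSpace ℝ (Fin (n + 1)) →L[ℝ] ℝ) else 0)
        (efun n k x)
      = 2 * √(sfun n k x / sfun n (k - 1) x) *
        (coordfun n x (k - 1) / sfun n k x * (if k ≤ (r : ℕ) then x r ^ 2 else 0)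
          - if r = ⟨k - 1, hlt⟩ then x r else 0) := by
    intro r
    have hk : ¬ k ≤ k - 1 := by omega
    simp only [Fin.ext_iff]
    split_ifs <;> first | omega | (simp [efun, *]; try ring)
  rw [Finset.sum_congr rfl fun r _ => hterm r, ← Finset.mul_sum, Finset.sum_sub_distrib,
    ← Finset.mul_sum, ← sfun, div_mul_cancel₀ _ hs]
  simp [coordfun, hlt]

lemma fderiv_sfun_efun_of_le {n j k : ℕ} (hk : 1 ≤ k) (hkj : k ≤ j)
    (x : EuclideanSpace ℝ (Fin (n + 1))) :
    fderiv ℝ (sfun n j) x (efun n k x)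
      = 2 * (√(sfun n k x / sfun n (k - 1) x) * (coordfun n x (k - 1) / sfun n k x))
        * sfun n j x := by
  rw [(hasFDerivAt_sfun n j x).fderiv, sum_apply]
  conv_rhs => rw [sfun.eq_def n j x, Finset.mul_sum]
  refine Finset.sum_congr rfl fun r _ => ?_
  split_ifs with h
  · have h1 : ¬ (r : ℕ) = k - 1 := by omega
    have h2 : k ≤ (r : ℕ) := by omega
    simp [efun, h1, h2]
    ring
  · simp

lemma fderiv_ffun_apply {n l : ℕ} (hl : l ≤ n) {x : EuclideanSpace ℝ (Fin (n + 1))}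
    (hx : x ∈ Usph n) (v : EuclideanSpace ℝ (Fin (n + 1))) :
    fderiv ℝ (ffun n l) x v
      = coordfun n v (l - 1) / √(sfun n (l - 1) x * sfun n l x)
        - coordfun n x (l - 1)
          * (fderiv ℝ (sfun n (l - 1)) x v * sfun n l x
            + sfun n (l - 1) x * fderiv ℝ (sfun n l) x v)
          / (2 * (sfun n (l - 1) x * sfun n l x) * √(sfun n (l - 1) x * sfun n l x)) := by
  have hlt : l - 1 < n + 1 := by omega
  have hp : 0 < sfun n (l - 1) x * sfun n l x :=
    mul_pos (sfun_pos (by omega) hx) (sfun_pos hl hx)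
  have hsq := Real.sq_sqrt hp.le
  have hpos := Real.sqrt_pos.2 hp
  have hprod := (hasFDerivAt_sfun n (l - 1) x).differentiableAt.hasFDerivAt.mul
    (hasFDerivAt_sfun n l x).differentiableAt.hasFDerivAt
  have hf := (hasFDerivAt_coordfun hlt x).mul
    ((hasDerivAt_inv hpos.ne').comp_hasFDerivAt x (hprod.sqrt hp.ne'))
  have hcv : v ⟨l - 1, hlt⟩ = coordfun n v (l - 1) := by simp [coordfun, hlt]
  have hff : fderiv ℝ (ffun n l) x v = _ := congrArg (fun L => L v) hf.fderiv
  rw [hff]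
  simp [hcv]
  generalize √(sfun n (l - 1) x * sfun n l x) = q at *
  rw [← hsq]
  field_simp
  ring

/-- Lemma 7 (Lemma `\ref{LemmaDerGamma}`): for `1 ≤ k, l ≤ n` and `x ∈ U ∩ S^n`, the
directional derivative `D_{e_k(x)} f_l(x)` equals `0` if `k > l`, equals `−1/s_k(x)` if `k = l`,
and equals `−x_{k−1}x_{l−1}/√(s_{k−1} s_k s_{l−1} s_l)` if `k < l`. -/
theorem statement2 (n k l : ℕ) (hk : 1 ≤ k) (hkn : k ≤ n) (hl : 1 ≤ l) (hln : l ≤ n)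
    (x : EuclideanSpace ℝ (Fin (n + 1))) (hxU : x ∈ Usph n) (hxS : x ∈ sph n) :
    fderiv ℝ (ffun n l) x (efun n k x)
      = if l < k then 0
        else if k = l then -(1 / sfun n k x)
        else -(coordfun n x (k - 1) * coordfun n x (l - 1)
          / Real.sqrt (sfun n (k - 1) x * sfun n k x * sfun n (l - 1) x * sfun n l x)) := by
  have hlt : l - 1 < n + 1 := by omega
  have hsk := sfun_pos hkn hxU
  have hsk' := sfun_pos (show k - 1 ≤ n by omega) hxU
  have hsl := sfun_pos hln hxU
  have hsl' := sfun_pos (show l - 1 ≤ n by omega) hxU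
  have hrec := sfun_sub_one hk hkn x
  rw [fderiv_ffun_apply hln hxU]
  rcases lt_trichotomy l k with h | rfl | h
  · have hc : coordfun n (efun n k x) (l - 1) = 0 := by
      have h1 : ¬ l - 1 = k - 1 := by omega
      have h2 : ¬ k ≤ l - 1 := by omega
      simp [coordfun, hlt, efun, h1, h2]
    rw [if_pos h, fderiv_sfun_efun_of_lt h hkn hxU,
      fderiv_sfun_efun_of_lt (by omega : l - 1 < k) hkn hxU, hc]
    simp
  · have hc : coordfun n (efun n l x) (l - 1) = -√(sfun n l x / sfun n (l - 1) x) := by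
      have h2 : ¬ l ≤ l - 1 := by omega
      simp [coordfun, hlt, efun, h2]
    rw [if_neg (lt_irrefl l), if_pos rfl, fderiv_sfun_efun_of_le hl le_rfl,
      fderiv_sfun_efun_of_lt (by omega : l - 1 < l) hln hxU, hc, Real.sqrt_div hsl.le,
      Real.sqrt_mul hsl'.le]
    have ha := Real.sq_sqrt hsl.le
    have hb := Real.sq_sqrt hsl'.le
    have ha' := Real.sqrt_pos.2 hsl
    have hb' := Real.sqrt_pos.2 hsl'
    generalize √(sfun n l x) = a at *
    generalize √(sfun n (l - 1) x) = b at *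
    rw [← ha, ← hb] at hrec ⊢
    field_simp
    linear_combination (2 * b) * hrec
  · have hc : coordfun n (efun n k x) (l - 1)
        = √(sfun n k x / sfun n (k - 1) x) * (coordfun n x (k - 1) / sfun n k x)
          * coordfun n x (l - 1) := by
      have h1 : ¬ l - 1 = k - 1 := by omega
      have h2 : k ≤ l - 1 := by omega
      rw [coordfun, dif_pos hlt, coordfun.eq_def n x (l - 1), dif_pos hlt]
      simp [efun, h1, h2]
      ring
    rw [if_neg h.not_gt, if_neg h.ne, fderiv_sfun_efun_of_le hk h.le,
      fderiv_sfun_efun_of_le hk (by omega : k ≤ l - 1), hc, Real.sqrt_div hsk.le,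
      mul_assoc (sfun n (k - 1) x * sfun n k x), Real.sqrt_mul (mul_pos hsk' hsk).le,
      Real.sqrt_mul hsk'.le]
    have hq := Real.sqrt_pos.2 (mul_pos hsl' hsl)
    have ha := Real.sq_sqrt hsk.le
    have ha' := Real.sqrt_pos.2 hsk
    have hb' := Real.sqrt_pos.2 hsk'
    generalize √(sfun n (l - 1) x * sfun n l x) = q at *
    generalize √(sfun n k x) = a at *
    generalize √(sfun n (k - 1) x) = b at *
    rw [← ha]
    field_simp
    ring
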